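/- Let m > n ≥ 2 be integers with θ = log n / log m, and let ν, η, ρ be shift-invariant Borel probability measures on I^ℕ (I a finite alphabet with |I| = N) satisfying ρ = θ·ν + (1−θ)·η. Suppose a : I → ℕ with a(j) ≥ 1 for all j. Then (∑_j ν([j]) log a(j))/log m + h(ρ,σ)/log n ≤ log N / log n + log((∑_j a(j))/N) / log m, where h(·,σ) denotes Kolmogorov–Sinai entropy and [j] the cylinder on the first symbol. -/

import Mathlib

open MeasureTheory

/-- The shift map on one-sided sequences. -/
def seqShift {α : Type*} (ω : ℕ → α) : ℕ → α := fun i => ω (i + 1)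

/-- Shannon entropy of a measure on the full shift with respect to the partition into
cylinders of length `q`. -/
noncomputable def cylEntropy {ι : Type*} [Fintype ι] [MeasurableSpace ι] (μ : Measure (ℕ → ι)) (q : ℕ) : ℝ :=
  ∑ w : Fin q → ι, Real.negMulLog ((μ {x | ∀ i : Fin q, x (i : ℕ) = w i}).toReal)

/-- Kolmogorov–Sinai entropy of a shift-invariant measure on the full shift, computed
via the generating partition into first-coordinate cylinders: `h = inf_q H_q / q`. -/
noncomputable def shiftEntropy {ι : Type*} [Fintype ι] [MeasurableSpace ι] (μ : Measure (ℕ → ι)) : ℝ :=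
  ⨅ q : ℕ, cylEntropy μ (q + 1) / (q + 1)

lemma peb_sum_cyl {ι : Type*} [Fintype ι] [MeasurableSpace ι] [DiscreteMeasurableSpace ι]
    (μ : Measure (ℕ → ι)) [IsProbabilityMeasure μ] (q : ℕ) (f : (Fin q → ι) → ℝ) :
    ∑ w : Fin q → ι, (μ {x | ∀ i : Fin q, x (i : ℕ) = w i}).toReal * f w
      = ∫ x, f (fun i : Fin q => x (i : ℕ)) ∂μ := by
  have hm : Measurable (fun (x : ℕ → ι) (i : Fin q) => x (i : ℕ)) := by fun_prop
  have hp : IsProbabilityMeasure (μ.map (fun (x : ℕ → ι) (i : Fin q) => x (i : ℕ))) :=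
    Measure.isProbabilityMeasure_map hm.aemeasurable
  have h1 : ∫ x, f (fun i : Fin q => x (i : ℕ)) ∂μ
      = ∫ w, f w ∂(μ.map (fun (x : ℕ → ι) (i : Fin q) => x (i : ℕ))) :=
    (integral_map hm.aemeasurable
      (Measurable.of_discrete (f := f)).aestronglyMeasurable).symm
  rw [h1, integral_fintype Integrable.of_finite]
  refine Finset.sum_congr rfl fun w _ => ?_
  rw [smul_eq_mul, measureReal_def, Measure.map_apply hm (measurableSet_singleton w)]
  congr 3
  congr 1
  ext x
  simp [funext_iff]

lemma peb_shift {ι : Type*} [Fintype ι] [MeasurableSpace ι] [DiscreteMeasurableSpace ι]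
    (μ : Measure (ℕ → ι)) [IsProbabilityMeasure μ] (hinv : Measure.map seqShift μ = μ)
    (g : ι → ℝ) (k : ℕ) : ∫ x, g (x k) ∂μ = ∫ x, g (x 0) ∂μ := by
  have hs : Measurable (seqShift : (ℕ → ι) → (ℕ → ι)) := by
    unfold seqShift; fun_prop
  induction k with
  | zero => rfl
  | succ k ih =>
    rw [← ih]
    have hg : Measurable (fun x : ℕ → ι => g (x k)) :=
      (Measurable.of_discrete (f := g)).comp (measurable_pi_apply k)
    conv_rhs => rw [← hinv]
    rw [integral_map hs.aemeasurable hg.aestronglyMeasurable]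
    rfl

lemma peb_first {ι : Type*} [Fintype ι] [MeasurableSpace ι] [DiscreteMeasurableSpace ι]
    (μ : Measure (ℕ → ι)) [IsProbabilityMeasure μ] (g : ι → ℝ) :
    ∫ x, g (x 0) ∂μ = ∑ j, (μ {x | x 0 = j}).toReal * g j := by
  have hm : Measurable (fun (x : ℕ → ι) => x 0) := by fun_prop
  have hp : IsProbabilityMeasure (μ.map (fun (x : ℕ → ι) => x 0)) :=
    Measure.isProbabilityMeasure_map hm.aemeasurable
  have h1 : ∫ x, g (x 0) ∂μ = ∫ w, g w ∂(μ.map (fun (x : ℕ → ι) => x 0)) :=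
    (integral_map hm.aemeasurable
      (Measurable.of_discrete (f := g)).aestronglyMeasurable).symm
  rw [h1, integral_fintype Integrable.of_finite]
  refine Finset.sum_congr rfl fun w _ => ?_
  rw [smul_eq_mul, measureReal_def, Measure.map_apply hm (measurableSet_singleton w)]
  rfl

lemma peb_gibbs {x b : ℝ} (hx : 0 ≤ x) (hb : 0 < b) :
    Real.negMulLog x ≤ x * (-Real.log b) + b - x := by
  rcases hx.eq_or_lt with rfl | hx
  · simp [hb.le]
  · have h := Real.log_le_sub_one_of_pos (div_pos hb hx)
    rw [Real.log_div hb.ne' hx.ne'] at h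
    have h2 := mul_le_mul_of_nonneg_left h hx.le
    have h3 : x * (b / x - 1) = b - x := by field_simp
    rw [h3] at h2
    unfold Real.negMulLog
    linarith

lemma peb_total {ι : Type*} [Fintype ι] [MeasurableSpace ι] [DiscreteMeasurableSpace ι]
    (μ : Measure (ℕ → ι)) [IsProbabilityMeasure μ] (q : ℕ) :
    ∑ w : Fin q → ι, (μ {x | ∀ i : Fin q, x (i : ℕ) = w i}).toReal = 1 := by
  have := peb_sum_cyl μ q (fun _ => 1)
  simpa using this

lemma peb_cyl_le {ι : Type*} [Fintype ι] [MeasurableSpace ι] [DiscreteMeasurableSpace ι]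
    [Nonempty ι] (μ : Measure (ℕ → ι)) [IsProbabilityMeasure μ]
    (hinv : Measure.map seqShift μ = μ) (a : ι → ℕ) (ha : ∀ j, 1 ≤ a j) (q : ℕ) :
    cylEntropy μ q ≤ q * (Real.log (∑ j, (a j : ℝ))
      - ∑ j, (μ {x | x 0 = j}).toReal * Real.log (a j)) := by
  set A : ℝ := ∑ j, (a j : ℝ) with hA
  have hapos : ∀ j, (0 : ℝ) < a j := fun j => by exact_mod_cast ha j
  have hApos : 0 < A := Finset.sum_pos (fun j _ => hapos j) Finset.univ_nonempty
  have hb : ∀ w : Fin q → ι, 0 < ∏ i, ((a (w i) : ℝ) / A) := fun w =>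
    Finset.prod_pos fun i _ => div_pos (hapos _) hApos
  have hbs : ∑ w : Fin q → ι, ∏ i, ((a (w i) : ℝ) / A) = 1 := by
    rw [← Fintype.sum_pow (fun j => (a j : ℝ) / A) q, ← Finset.sum_div, ← hA,
      div_self hApos.ne', one_pow]
  have h1 : cylEntropy μ q ≤ ∑ w : Fin q → ι,
      ((μ {x | ∀ i : Fin q, x (i : ℕ) = w i}).toReal
        * (-Real.log (∏ i, ((a (w i) : ℝ) / A))) + ∏ i, ((a (w i) : ℝ) / A)
        - (μ {x | ∀ i : Fin q, x (i : ℕ) = w i}).toReal) :=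
    Finset.sum_le_sum fun w _ => peb_gibbs ENNReal.toReal_nonneg (hb w)
  rw [Finset.sum_sub_distrib, Finset.sum_add_distrib, hbs, peb_total] at h1
  refine h1.trans (le_of_eq ?_)
  have h2 : ∀ w : Fin q → ι, -Real.log (∏ i, ((a (w i) : ℝ) / A))
      = ∑ i, (Real.log A - Real.log (a (w i))) := fun w => by
    rw [Real.log_prod (fun i _ => (div_pos (hapos _) hApos).ne'), ← Finset.sum_neg_distrib]
    refine Finset.sum_congr rfl fun i _ => ?_
    rw [Real.log_div (hapos _).ne' hApos.ne']; ring
  simp_rw [h2, Finset.mul_sum]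
  rw [Finset.sum_comm]
  have h3 : ∀ i : Fin q, ∑ w : Fin q → ι, (μ {x | ∀ i : Fin q, x (i : ℕ) = w i}).toReal
      * (Real.log A - Real.log (a (w i)))
      = Real.log A - ∑ j, (μ {x | x 0 = j}).toReal * Real.log (a j) := fun i => by
    have h4 := peb_sum_cyl μ q (fun w => Real.log (a (w i)))
    simp only at h4
    rw [peb_shift μ hinv (fun j => Real.log (a j)) i,
      peb_first μ (fun j => Real.log (a j))] at h4
    simp_rw [mul_sub]
    rw [Finset.sum_sub_distrib, h4, ← Finset.sum_mul, peb_total, one_mul]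
  simp_rw [h3]
  simp
  ring

lemma peb_negMulLog_add {u v : ℝ} (hu : 0 ≤ u) (hv : 0 ≤ v) :
    Real.negMulLog (u + v) ≤ Real.negMulLog u + Real.negMulLog v := by
  have key : ∀ {u v : ℝ}, 0 ≤ u → 0 ≤ v → u * Real.log u ≤ u * Real.log (u + v) := by
    intro u v hu hv
    rcases hu.eq_or_lt with rfl | hu
    · simp
    · exact mul_le_mul_of_nonneg_left (Real.log_le_log hu (by linarith)) hu.le
  have h1 := key hu hv
  have h2 := key hv hu
  rw [add_comm v u] at h2
  unfold Real.negMulLog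
  nlinarith

lemma peb_mix {ι : Type*} [Fintype ι] [MeasurableSpace ι] [DiscreteMeasurableSpace ι]
    (ν η ρ : Measure (ℕ → ι)) [IsProbabilityMeasure ν] [IsProbabilityMeasure η]
    (s t : ℝ) (hs : 0 ≤ s) (ht : 0 ≤ t)
    (hcomb : ρ = ENNReal.ofReal s • ν + ENNReal.ofReal t • η) (q : ℕ) :
    cylEntropy ρ q ≤ s * cylEntropy ν q + t * cylEntropy η q
      + (Real.negMulLog s + Real.negMulLog t) := by
  have h : cylEntropy ρ q ≤ ∑ w : Fin q → ι,
      (s * Real.negMulLog ((ν {x | ∀ i : Fin q, x (i : ℕ) = w i}).toReal)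
      + t * Real.negMulLog ((η {x | ∀ i : Fin q, x (i : ℕ) = w i}).toReal)
      + ((ν {x | ∀ i : Fin q, x (i : ℕ) = w i}).toReal * Real.negMulLog s
      + (η {x | ∀ i : Fin q, x (i : ℕ) = w i}).toReal * Real.negMulLog t)) := by
    refine Finset.sum_le_sum fun w _ => ?_
    have e : (ρ {x | ∀ i : Fin q, x (i : ℕ) = w i}).toReal
        = s * (ν {x | ∀ i : Fin q, x (i : ℕ) = w i}).toReal
        + t * (η {x | ∀ i : Fin q, x (i : ℕ) = w i}).toReal := by
      rw [hcomb, Measure.add_apply, Measure.smul_apply, Measure.smul_apply, smul_eq_mul,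
        smul_eq_mul, ENNReal.toReal_add (by finiteness) (by finiteness), ENNReal.toReal_mul,
        ENNReal.toReal_mul, ENNReal.toReal_ofReal hs, ENNReal.toReal_ofReal ht]
    rw [e]
    refine (peb_negMulLog_add (by positivity) (by positivity)).trans (le_of_eq ?_)
    rw [Real.negMulLog_mul, Real.negMulLog_mul]
    ring
  refine h.trans (le_of_eq ?_)
  simp only [Finset.sum_add_distrib, ← Finset.mul_sum, ← Finset.sum_mul, peb_total]
  simp [cylEntropy]

lemma peb_cyl_nonneg {ι : Type*} [Fintype ι] [MeasurableSpace ι]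
    (μ : Measure (ℕ → ι)) [IsProbabilityMeasure μ] (q : ℕ) : 0 ≤ cylEntropy μ q :=
  Finset.sum_nonneg fun _ _ => Real.negMulLog_nonneg ENNReal.toReal_nonneg
    measureReal_le_one

theorem packing_entropy_bound {ι : Type*} [Fintype ι] [MeasurableSpace ι] [DiscreteMeasurableSpace ι] [Nonempty ι]
    (m n : ℕ) (hnm : n < m) (hn : 2 ≤ n) (θ : ℝ) (hθ : θ = Real.log n / Real.log m)
    (ν η ρ : Measure (ℕ → ι))
    [IsProbabilityMeasure ν] [IsProbabilityMeasure η] [IsProbabilityMeasure ρ]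
    (hνinv : Measure.map seqShift ν = ν)
    (hηinv : Measure.map seqShift η = η)
    (hρinv : Measure.map seqShift ρ = ρ)
    (hcomb : ρ = ENNReal.ofReal θ • ν + ENNReal.ofReal (1 - θ) • η)
    (a : ι → ℕ) (ha : ∀ j, 1 ≤ a j) :
    (∑ j, (ν {x | x 0 = j}).toReal * Real.log (a j)) / Real.log m
        + shiftEntropy ρ / Real.log n
      ≤ Real.log (Fintype.card ι) / Real.log n
        + Real.log ((∑ j, (a j : ℝ)) / (Fintype.card ι : ℝ)) / Real.log m := by
  have hn1 : (1 : ℝ) < n := by exact_mod_cast hn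
  have hnm' : (n : ℝ) < m := by exact_mod_cast hnm
  have hln : 0 < Real.log n := Real.log_pos hn1
  have hlm : 0 < Real.log m := Real.log_pos (hn1.trans hnm')
  have hlt : Real.log n < Real.log m := Real.log_lt_log (by linarith) hnm'
  have hθ0 : 0 ≤ θ := by rw [hθ]; positivity
  have hθ1 : 0 ≤ 1 - θ := by
    rw [hθ, sub_nonneg, div_le_one hlm]; exact hlt.le
  have hapos : ∀ j, (0 : ℝ) < a j := fun j => by exact_mod_cast ha j
  have hApos : 0 < ∑ j, (a j : ℝ) := Finset.sum_pos (fun j _ => hapos j) Finset.univ_nonempty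
  have hN : (0 : ℝ) < Fintype.card ι := by exact_mod_cast Fintype.card_pos
  set S := ∑ j, (ν {x | x 0 = j}).toReal * Real.log (a j) with hS
  set A := ∑ j, (a j : ℝ) with hA
  set C := Real.negMulLog θ + Real.negMulLog (1 - θ) with hC
  set B := θ * (Real.log A - S) + (1 - θ) * Real.log (Fintype.card ι) with hB
  have hq : ∀ q : ℕ, shiftEntropy ρ ≤ B + C / ((q : ℝ) + 1) := by
    intro q
    have h0 : shiftEntropy ρ ≤ cylEntropy ρ (q + 1) / (q + 1) := by
      refine ciInf_le ⟨0, ?_⟩ q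
      rintro _ ⟨k, rfl⟩
      exact div_nonneg (peb_cyl_nonneg ρ _) (by positivity)
    have h1 := peb_mix ν η ρ θ (1 - θ) hθ0 hθ1 hcomb (q + 1)
    have h2 := mul_le_mul_of_nonneg_left (peb_cyl_le ν hνinv a ha (q + 1)) hθ0
    have h3 : cylEntropy η (q + 1) ≤ ((q + 1 : ℕ) : ℝ) * Real.log (Fintype.card ι) := by
      simpa using peb_cyl_le η hηinv (fun _ => 1) (fun _ => le_rfl) (q + 1)
    have h4 := mul_le_mul_of_nonneg_left h3 hθ1
    refine h0.trans ?_
    have hq0 : (0 : ℝ) < (q : ℝ) + 1 := by positivity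
    rw [div_le_iff₀ hq0, add_mul, div_mul_cancel₀ _ hq0.ne']
    push_cast at h2 h4
    rw [← hA, ← hS] at h2
    rw [hB]
    linarith
  have hlim : shiftEntropy ρ ≤ B := by
    have ht : Filter.Tendsto (fun q : ℕ => B + C / ((q : ℝ) + 1)) Filter.atTop (nhds (B + 0)) := by
      refine tendsto_const_nhds.add ?_
      have := (tendsto_one_div_add_atTop_nhds_zero_nat (𝕜 := ℝ)).const_mul C
      simpa [div_eq_mul_inv] using this
    rw [add_zero] at ht
    exact ge_of_tendsto' ht hq
  have hfin : shiftEntropy ρ / Real.log n ≤ B / Real.log n :=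
    div_le_div_of_nonneg_right hlim hln.le
  have hBe : B / Real.log n = Real.log (Fintype.card ι) / Real.log n
      + (Real.log A - Real.log (Fintype.card ι)) / Real.log m - S / Real.log m := by
    rw [hB, hθ]; field_simp; ring
  rw [Real.log_div hApos.ne' hN.ne']
  linarith
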